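/- Let f be holomorphic on the sector Δ = {z ∈ ℂ : Re z > 0 and |Im z| < Re z}. Then, as an identity in [0,∞], ∫_Δ |f(z)|² dA(z) = ∑_{n=0}^∞ (2^n/(2n+1)!) ∫_0^∞ x^{2n+1} |f^{(n)}(x)|² dx, where f^{(n)} denotes the n-th complex derivative of f. In particular, if f belongs to the Bergman space A²(Δ) (i.e. ∫_Δ |f|² dA < ∞), then the right-hand side is finite and equals the squared Bergman norm of f. -/

import Mathlib

open MeasureTheory Set
open scoped ENNReal NNReal

/-- The open sector `Δ = {z : Re z > 0 ∧ |Im z| < Re z}`. -/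
def Delta : Set ℂ := {z : ℂ | 0 < z.re ∧ |z.im| < z.re}

lemma circ_int (k : ℤ) : ∫ α in (-Real.pi)..Real.pi, Complex.exp (k * α * Complex.I) = if k = 0 then 2 * Real.pi else 0 := by
  split_ifs with h
  · subst h; simp; ring
  · have h1 : ∀ α : ℝ, Complex.exp (k * α * Complex.I) = Complex.exp ((k * Complex.I) * α) := fun α => by ring_nf
    simp_rw [h1]
    rw [integral_exp_mul_complex (by simp [h])]
    have : Complex.exp (k * Complex.I * (Real.pi:ℝ)) = Complex.exp (k * Complex.I * ((-Real.pi : ℝ):ℂ)) := by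
      rw [Complex.exp_eq_exp_iff_exists_int]
      exact ⟨k, by push_cast; ring⟩
    rw [this]; simp

lemma parseval (b : ℕ → ℂ) (hb : Summable (fun n => ‖b n‖)) (H : ℝ → ℂ)
    (hH : ∀ α : ℝ, HasSum (fun n : ℕ => b n * Complex.exp (n * α * Complex.I)) (H α)) :
    HasSum (fun n => 2 * Real.pi * ‖b n‖ ^ 2) (∫ α in (-Real.pi)..Real.pi, ‖H α‖ ^ 2) := by
  have hnorm : ∀ (n : ℕ) (α : ℝ), ‖b n * Complex.exp (n * α * Complex.I)‖ = ‖b n‖ := by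
    intro n α
    have : (n * α * Complex.I : ℂ) = ((n * α : ℝ) : ℂ) * Complex.I := by push_cast; ring
    rw [norm_mul, this, Complex.norm_exp_ofReal_mul_I, mul_one]
  let F : ℕ × ℕ → ℝ → ℂ := fun p α =>
    (b p.1 * Complex.exp (p.1 * α * Complex.I)) * (starRingEnd ℂ) (b p.2 * Complex.exp (p.2 * α * Complex.I))
  have hFn : ∀ p α, ‖F p α‖ = ‖b p.1‖ * ‖b p.2‖ := by
    intro p α
    simp only [F]
    rw [norm_mul, Complex.norm_conj, hnorm, hnorm]
  have hsumF : ∀ α, HasSum (fun p => F p α) (((‖H α‖ ^ 2 : ℝ)) : ℂ) := by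
    intro α
    have h1 := hH α
    have h2 : HasSum (fun n : ℕ => (starRingEnd ℂ) (b n * Complex.exp (n * α * Complex.I))) ((starRingEnd ℂ) (H α)) :=
      Complex.hasSum_conj'.mpr h1 
    have h3 : Summable (fun p => F p α) := by
      apply Summable.of_norm
      simp_rw [hFn]
      exact hb.mul_of_nonneg hb (fun _ => norm_nonneg _) (fun _ => norm_nonneg _)
    have := h1.mul h2 h3
    rwa [Complex.mul_conj, Complex.normSq_eq_norm_sq] at this
  have hle : -Real.pi ≤ Real.pi := by linarith [Real.pi_pos]
  have hFc : ∀ p, Continuous (F p) := by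
    intro p; simp only [F]; fun_prop
  have key := hasSum_integral_of_summable_integral_norm (μ := volume.restrict (Ioc (-Real.pi) Real.pi)) (F := F)
    (fun p => ((hFc p).integrableOn_Ioc)) (by
      simp_rw [hFn]
      simp only [integral_const]
      exact (hb.mul_of_nonneg hb (fun _ => norm_nonneg _) (fun _ => norm_nonneg _)).const_smul _)
  have hI : ∀ p : ℕ × ℕ, ∫ α in Ioc (-Real.pi) Real.pi, F p α = if p.1 = p.2 then ((2 * Real.pi * ‖b p.1‖ ^ 2 : ℝ) : ℂ) else 0 := by
    intro p
    rw [← intervalIntegral.integral_of_le hle]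
    have : ∀ α : ℝ, F p α = (b p.1 * (starRingEnd ℂ) (b p.2)) * Complex.exp (((p.1 - p.2 : ℤ) : ℂ) * α * Complex.I) := by
      intro α
      simp only [F, map_mul, ← Complex.exp_conj, Complex.conj_I, Complex.conj_ofReal, map_natCast]
      have : (((p.1 - p.2 : ℤ) : ℂ) * α * Complex.I) = p.1 * α * Complex.I + p.2 * α * (-Complex.I) := by
        push_cast; ring
      rw [this, Complex.exp_add]; ring
    simp_rw [this]
    rw [intervalIntegral.integral_const_mul, circ_int]
    by_cases h : p.1 = p.2
    · rw [if_pos (by omega), if_pos h, h, Complex.mul_conj, Complex.normSq_eq_norm_sq]; push_cast; ring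
    · rw [if_neg (by omega), if_neg h]; simp
  simp_rw [hI, fun α => (hsumF α).tsum_eq] at key
  have inj : Function.Injective (fun n : ℕ => (n, n)) := fun a b h => (Prod.ext_iff.mp h).1
  rw [← inj.hasSum_iff] at key
  · rw [integral_complex_ofReal, ← intervalIntegral.integral_of_le hle] at key
    simp only [Function.comp_def, if_true] at key
    exact_mod_cast key
  · intro p hp
    rw [if_neg]
    intro h; apply hp
    exact ⟨p.1, Prod.ext rfl h⟩

lemma arcsine (R c : ℝ) (hR : 0 < R) :
    ∫⁻ x : ℝ, ENNReal.ofReal ((√(R - (x - c) ^ 2))⁻¹) = ENNReal.ofReal Real.pi := by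
  have hs : 0 < √R := Real.sqrt_pos.mpr hR
  have hss : √R ^ 2 = R := Real.sq_sqrt hR.le
  have hder : ∀ φ ∈ Ioo (-(Real.pi/2)) (Real.pi/2), HasDerivWithinAt (fun φ => c + √R * Real.sin φ) (√R * Real.cos φ) (Ioo (-(Real.pi/2)) (Real.pi/2)) φ := by
    intro φ _
    exact (((Real.hasDerivAt_sin φ).const_mul _).const_add c).hasDerivWithinAt
  have hinj : InjOn (fun φ => c + √R * Real.sin φ) (Ioo (-(Real.pi/2)) (Real.pi/2)) := by
    intro a ha b hb h
    simp only [add_right_inj] at h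
    exact Real.injOn_sin (Ioo_subset_Icc_self ha) (Ioo_subset_Icc_self hb) (mul_left_cancel₀ hs.ne' h)
  have himg : ∀ x, x ∉ (fun φ => c + √R * Real.sin φ) '' (Ioo (-(Real.pi/2)) (Real.pi/2)) → ENNReal.ofReal ((√(R - (x - c) ^ 2))⁻¹) = 0 := by
    intro x hx
    rw [Real.sqrt_eq_zero_of_nonpos, inv_zero, ENNReal.ofReal_zero]
    by_contra! h
    apply hx
    have h1 : |(x - c) / √R| < 1 := by
      rw [abs_div, abs_of_pos hs, div_lt_one hs]
      exact Real.lt_sqrt_of_sq_lt (by rw [sq_abs]; linarith)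
    rw [abs_lt] at h1
    refine ⟨Real.arcsin ((x - c) / √R), ⟨Real.neg_pi_div_two_lt_arcsin.mpr h1.1, Real.arcsin_lt_pi_div_two.mpr h1.2⟩, ?_⟩
    simp only
    rw [Real.sin_arcsin h1.1.le h1.2.le]; field_simp; try ring
  rw [← setLIntegral_eq_of_support_subset (s := (fun φ => c + √R * Real.sin φ) '' (Ioo (-(Real.pi/2)) (Real.pi/2)))
     ?_, lintegral_image_eq_lintegral_abs_deriv_mul measurableSet_Ioo hder hinj]
  · rw [setLIntegral_congr_fun (g := fun _ => 1) measurableSet_Ioo]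
    · simp
    · intro φ hφ
      have hc := Real.cos_pos_of_mem_Ioo hφ
      have : R - (c + √R * Real.sin φ - c) ^ 2 = (√R * Real.cos φ) ^ 2 := by
        rw [mul_pow, hss, Real.cos_sq']; ring_nf; rw [hss]
      simp only
      rw [this, Real.sqrt_sq (by positivity), abs_of_pos (by positivity), ← ENNReal.ofReal_mul (by positivity), mul_inv_cancel₀ (by positivity), ENNReal.ofReal_one]
  · intro x hx
    by_contra h
    exact hx (himg x h)

lemma wallis (n : ℕ) : ∏ i ∈ Finset.range n, (2 * (i : ℝ) + 2) / (2 * i + 3) = 4 ^ n * (n.factorial : ℝ) ^ 2 / ((2 * n + 1).factorial : ℝ) := by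
  induction n with
  | zero => simp
  | succ k ih =>
    rw [Finset.prod_range_succ, ih]
    have : 2 * (k + 1) + 1 = (2 * k + 1) + 1 + 1 := by ring
    rw [this, Nat.factorial_succ (2*k+1+1), Nat.factorial_succ (2 * k + 1), Nat.factorial_succ k]
    push_cast
    field_simp
    ring

lemma sin_half (n : ℕ) : ∫ x in (0:ℝ)..(Real.pi/2), Real.sin x ^ (2 * n + 1) = 4 ^ n * (n.factorial : ℝ) ^ 2 / ((2 * n + 1).factorial : ℝ) := by
  have h := integral_sin_pow_odd n
  have hc : Continuous (fun x : ℝ => Real.sin x ^ (2 * n + 1)) := by fun_prop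
  rw [← intervalIntegral.integral_add_adjacent_intervals (b := Real.pi/2) (hc.intervalIntegrable _ _) (hc.intervalIntegrable _ _)] at h
  have h2 : ∫ x in (Real.pi/2)..Real.pi, Real.sin x ^ (2 * n + 1) = ∫ x in (0:ℝ)..(Real.pi/2), Real.sin x ^ (2 * n + 1) := by
    have := intervalIntegral.integral_comp_sub_left (fun x => Real.sin x ^ (2 * n + 1)) Real.pi (a := Real.pi/2) (b := Real.pi)
    simp only [Real.sin_pi_sub, sub_self] at this
    rw [this]; congr 1; ring
  rw [h2, wallis] at h
  linarith

lemma radial (n : ℕ) : ∫⁻ r in Ioi (0:ℝ), ENNReal.ofReal (r ^ (2 * n + 1)) * ENNReal.ofReal ((√(1 - 2 * r ^ 2))⁻¹) =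
    ENNReal.ofReal (2 ^ n * (n.factorial : ℝ) ^ 2 / (2 * ((2 * n + 1).factorial : ℝ))) := by
  have hs : 0 < √2 := Real.sqrt_pos.mpr (by norm_num)
  have hss : √2 ^ 2 = 2 := Real.sq_sqrt (by norm_num)
  have hder : ∀ φ ∈ Ioo 0 (Real.pi/2), HasDerivWithinAt (fun φ => (√2)⁻¹ * Real.sin φ) ((√2)⁻¹ * Real.cos φ) (Ioo 0 (Real.pi/2)) φ := by
    intro φ _
    exact (((Real.hasDerivAt_sin φ).const_mul _)).hasDerivWithinAt
  have hpi := Real.pi_pos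
  have hsub : Ioo 0 (Real.pi/2) ⊆ Icc (-(Real.pi/2)) (Real.pi/2) := fun x hx => ⟨by linarith [hx.1], hx.2.le⟩
  have hinj : InjOn (fun φ => (√2)⁻¹ * Real.sin φ) (Ioo 0 (Real.pi/2)) := by
    intro a ha b hb h
    exact Real.injOn_sin (hsub ha) (hsub hb) (mul_left_cancel₀ (inv_pos.mpr hs).ne' h)
  have himg : ∀ x ∈ Ioi (0:ℝ), x ∉ (fun φ => (√2)⁻¹ * Real.sin φ) '' (Ioo 0 (Real.pi/2)) → ENNReal.ofReal ((√(1 - 2 * x ^ 2))⁻¹) = 0 := by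
    intro x hx0 hx
    have hx0' : 0 < x := hx0
    rw [Real.sqrt_eq_zero_of_nonpos, inv_zero, ENNReal.ofReal_zero]
    by_contra! h
    apply hx
    have h1 : √2 * x < 1 := by
      by_contra! h'
      have : 1 ≤ (√2 * x) ^ 2 := one_le_pow₀ h'
      rw [mul_pow, hss] at this; linarith
    have h0 : 0 < √2 * x := by positivity
    refine ⟨Real.arcsin (√2 * x), ⟨Real.arcsin_pos.mpr h0, Real.arcsin_lt_pi_div_two.mpr h1⟩, ?_⟩
    simp only
    rw [Real.sin_arcsin (by linarith) h1.le]; field_simp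
  have himg' : (fun φ => (√2)⁻¹ * Real.sin φ) '' (Ioo 0 (Real.pi/2)) ⊆ Ioi 0 := by
    rintro _ ⟨φ, hφ, rfl⟩
    exact mul_pos (inv_pos.mpr hs) (Real.sin_pos_of_pos_of_lt_pi hφ.1 (by linarith [hφ.2]))
  have hm : MeasurableSet ((fun φ => (√2)⁻¹ * Real.sin φ) '' (Ioo 0 (Real.pi/2))) :=
    measurableSet_Ioo.image_of_continuousOn_injOn (by fun_prop) hinj
  have e1 : ∫⁻ r in Ioi (0:ℝ), ENNReal.ofReal (r ^ (2 * n + 1)) * ENNReal.ofReal ((√(1 - 2 * r ^ 2))⁻¹) = ∫⁻ r in (fun φ => (√2)⁻¹ * Real.sin φ) '' (Ioo 0 (Real.pi/2)), ENNReal.ofReal (r ^ (2 * n + 1)) * ENNReal.ofReal ((√(1 - 2 * r ^ 2))⁻¹) := by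
    rw [← lintegral_indicator measurableSet_Ioi, ← lintegral_indicator hm]
    congr 1; ext x
    by_cases hx : x ∈ (fun φ => (√2)⁻¹ * Real.sin φ) '' (Ioo 0 (Real.pi/2))
    · rw [indicator_of_mem hx, indicator_of_mem (himg' hx)]
    · rw [indicator_of_notMem hx]
      by_cases hx2 : x ∈ Ioi (0:ℝ)
      · rw [indicator_of_mem hx2, himg x hx2 hx, mul_zero]
      · rw [indicator_of_notMem hx2]
  rw [e1, lintegral_image_eq_lintegral_abs_deriv_mul measurableSet_Ioo hder hinj]
  have e2 : ∀ φ ∈ Ioo 0 (Real.pi/2), ENNReal.ofReal |(√2)⁻¹ * Real.cos φ| * (ENNReal.ofReal (((√2)⁻¹ * Real.sin φ) ^ (2 * n + 1)) * ENNReal.ofReal ((√(1 - 2 * ((√2)⁻¹ * Real.sin φ) ^ 2))⁻¹)) = ENNReal.ofReal ((2 ^ (n+1))⁻¹ * Real.sin φ ^ (2 * n + 1)) := by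
    intro φ hφ
    have hc := Real.cos_pos_of_mem_Ioo (x := φ) ⟨by linarith [hφ.1], hφ.2⟩
    have hsn := Real.sin_pos_of_pos_of_lt_pi hφ.1 (by linarith [hφ.2])
    have : 1 - 2 * ((√2)⁻¹ * Real.sin φ) ^ 2 = Real.cos φ ^ 2 := by
      rw [mul_pow, inv_pow, hss, Real.cos_sq']; ring
    rw [this, Real.sqrt_sq hc.le, abs_of_pos (by positivity), ← ENNReal.ofReal_mul (by positivity), ← ENNReal.ofReal_mul (by positivity)]
    congr 1
    have h4 : (√2)⁻¹ ^ (2 * n + 1) * (√2)⁻¹ = (2 ^ (n+1))⁻¹ := by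
      rw [← pow_succ, inv_pow]; congr 1
      rw [show 2 * n + 1 + 1 = 2 * (n + 1) by ring, pow_mul, hss]
    rw [← h4, mul_pow]; field_simp
  rw [setLIntegral_congr_fun measurableSet_Ioo e2, restrict_Ioo_eq_restrict_Ioc]
  rw [← ofReal_integral_eq_lintegral_ofReal]
  · rw [← intervalIntegral.integral_of_le (by positivity), intervalIntegral.integral_const_mul, sin_half]
    congr 1
    rw [show (4:ℝ) = 2 * 2 by norm_num, mul_pow]; field_simp; rw [pow_succ]
  · exact (by fun_prop : Continuous fun φ => ((2:ℝ) ^ (n+1))⁻¹ * Real.sin φ ^ (2 * n + 1)).integrableOn_Ioc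
  · filter_upwards [ae_restrict_mem measurableSet_Ioc] with φ hφ
    have hsn := Real.sin_pos_of_pos_of_lt_pi hφ.1 (by linarith [hφ.2])
    simp only [Pi.zero_apply]; positivity

lemma mem_Delta_of (x : ℝ) (hx : 0 < x) (w : ℂ) (hw : ‖w‖ ^ 2 < 1 / 2) : (x : ℂ) * (1 + w) ∈ Delta := by
  have h : w.re ^ 2 + w.im ^ 2 < 1 / 2 := by
    rw [← Complex.normSq_eq_norm_sq, Complex.normSq_apply] at hw; nlinarith
  have h1 : 0 < 1 + w.re := by nlinarith
  have h2 : |w.im| < 1 + w.re := by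
    apply abs_lt_of_sq_lt_sq _ h1.le
    nlinarith [sq_nonneg (w.re + 1 / 2)]
  simp only [Delta, mem_ofPred_eq, Complex.re_ofReal_mul, Complex.im_ofReal_mul, Complex.add_re, Complex.one_re,
    Complex.add_im, Complex.one_im, zero_add, abs_mul, abs_of_pos hx]
  exact ⟨by positivity, by gcongr⟩

lemma ball_subset_Delta (x : ℝ) (hx : 0 < x) : Metric.ball (x : ℂ) (x / √2) ⊆ Delta := by
  intro z hz
  have hxc : (x : ℂ) ≠ 0 := by exact_mod_cast hx.ne'
  have : z = (x : ℂ) * (1 + (z - x) / x) := by field_simp; ring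
  rw [this]
  apply mem_Delta_of x hx
  rw [Metric.mem_ball, dist_eq_norm] at hz
  rw [norm_div, Complex.norm_real, Real.norm_of_nonneg hx.le, div_pow, div_lt_iff₀ (by positivity)]
  calc ‖z - x‖ ^ 2 < (x / √2) ^ 2 := by gcongr
    _ = _ := by rw [div_pow, Real.sq_sqrt (by norm_num)]; ring

lemma isOpen_Delta : IsOpen Delta :=
  (isOpen_lt continuous_const Complex.continuous_re).inter
    (isOpen_lt (Complex.continuous_im.abs) Complex.continuous_re)

lemma circle_int (f : ℂ → ℂ) (hf : DifferentiableOn ℂ f Delta) (x r : ℝ) (hx : 0 < x) (hr : 0 < r)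
    (hr2 : r ^ 2 < 1 / 2) :
    ∫⁻ α in Ioo (-Real.pi) Real.pi, (‖f (x * (1 + r * Complex.exp (α * Complex.I)))‖₊ : ℝ≥0∞) ^ 2 =
      ∑' n : ℕ, ENNReal.ofReal (2 * Real.pi * (x * r) ^ (2 * n) / (n.factorial : ℝ) ^ 2) *
        (‖iteratedDeriv n f (x : ℂ)‖₊ : ℝ≥0∞) ^ 2 := by
  set H : ℝ → ℂ := fun α => f (x * (1 + r * Complex.exp (α * Complex.I))) with hHdef
  set b : ℕ → ℂ := fun n => (n.factorial : ℂ)⁻¹ * ((x * r : ℝ) : ℂ) ^ n * iteratedDeriv n f x with hb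
  have hxr : x * r < x / √2 := by
    rw [lt_div_iff₀ (by positivity), mul_assoc]
    have : r * √2 < 1 := by
      by_contra! h
      have h2 : 1 ≤ (r * √2) ^ 2 := one_le_pow₀ h
      rw [mul_pow, Real.sq_sqrt (by norm_num)] at h2; linarith
    nlinarith
  have hH : ∀ α : ℝ, HasSum (fun n : ℕ => b n * Complex.exp (n * α * Complex.I)) (H α) := by
    intro α
    have hz : (x * (1 + r * Complex.exp (α * Complex.I)) : ℂ) ∈ Metric.ball (x : ℂ) (x / √2) := by
      rw [Metric.mem_ball, dist_eq_norm]
      have : (x * (1 + r * Complex.exp (α * Complex.I)) : ℂ) - x = ((x * r : ℝ) : ℂ) * Complex.exp (α * Complex.I) := by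
        push_cast; ring
      rw [this, norm_mul, Complex.norm_exp_ofReal_mul_I, mul_one, Complex.norm_real, Real.norm_of_nonneg (by positivity)]
      exact hxr
    have := Complex.hasSum_taylorSeries_on_ball (hf.mono (ball_subset_Delta x hx)) hz
    refine (congrArg (fun q : ℕ → ℂ => HasSum q (H α)) (funext fun n => ?_)).mpr this
    simp only [hb, smul_eq_mul]
    have e : (x * (1 + r * Complex.exp (α * Complex.I)) : ℂ) - x = ((x * r : ℝ) : ℂ) * Complex.exp (α * Complex.I) := by
        push_cast; ring
    rw [e, mul_pow, ← Complex.exp_nat_mul]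
    ring_nf
  have hbs : Summable (fun n => ‖b n‖) := by
    have := (hH 0).summable.norm
    simpa using this
  have hp := parseval b hbs H hH
  have hHc : Continuous H := by
    rw [continuous_iff_continuousAt]
    intro α
    have hm : (x * (1 + r * Complex.exp (α * Complex.I)) : ℂ) ∈ Delta := by
      apply mem_Delta_of x hx
      rw [norm_mul, Complex.norm_exp_ofReal_mul_I, mul_one, Complex.norm_real, Real.norm_of_nonneg hr.le]
      exact hr2
    have h1 := (hf.differentiableAt (isOpen_Delta.mem_nhds hm)).continuousAt
    have h2 : ContinuousAt (fun α : ℝ => (x * (1 + r * Complex.exp (α * Complex.I)) : ℂ)) α := by fun_prop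
    exact ContinuousAt.comp (f := fun α : ℝ => (x * (1 + r * Complex.exp (α * Complex.I)) : ℂ)) h1 h2
  have conv : ∀ z : ℂ, (‖z‖₊ : ℝ≥0∞) ^ 2 = ENNReal.ofReal (‖z‖ ^ 2) := by
    intro z
    rw [ENNReal.ofReal_pow (norm_nonneg _), ofReal_norm]; rfl
  simp_rw [conv]
  rw [restrict_Ioo_eq_restrict_Ioc, ← ofReal_integral_eq_lintegral_ofReal
    ((by fun_prop : Continuous fun α => ‖H α‖ ^ 2).integrableOn_Ioc) (Filter.Eventually.of_forall fun _ => by positivity),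
    ← intervalIntegral.integral_of_le (by linarith [Real.pi_pos]), ← hp.tsum_eq,
    ENNReal.ofReal_tsum_of_nonneg (fun _ => by positivity) hp.summable]
  congr 1; ext n
  rw [← ENNReal.ofReal_mul (by positivity)]
  congr 1
  simp only [hb, norm_mul, norm_inv, norm_pow, Complex.norm_natCast, Complex.norm_real, Real.norm_of_nonneg (by positivity : 0 ≤ x * r)]
  rw [mul_pow, mul_pow, inv_pow, ← pow_mul, mul_comm n 2]; field_simp

noncomputable def kern (w : ℂ) : ℝ≥0∞ := ENNReal.ofReal ((√(1 - 2 * ‖w‖ ^ 2))⁻¹)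

lemma kern_meas : Measurable kern := by unfold kern; fun_prop

noncomputable def gfun (f : ℂ → ℂ) : ℂ → ℝ≥0∞ := Delta.indicator (fun z => (‖f z‖₊ : ℝ≥0∞) ^ 2)

lemma gfun_meas (f : ℂ → ℂ) (hf : DifferentiableOn ℂ f Delta) : Measurable (gfun f) := by
  have h : ContinuousOn (fun z => (‖f z‖₊ : ℝ≥0∞) ^ 2) Delta := by
    have := hf.continuousOn
    have h1 : ContinuousOn (fun z => (‖f z‖₊ : ℝ≥0∞)) Delta := ENNReal.continuous_coe.comp_continuousOn this.nnnorm
    exact (ENNReal.continuous_pow 2).comp_continuousOn h1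
  unfold gfun
  classical
  rw [← piecewise_eq_indicator]
  exact h.measurable_piecewise continuousOn_const isOpen_Delta.measurableSet

lemma disc_int (f : ℂ → ℂ) (hf : DifferentiableOn ℂ f Delta) (x : ℝ) (hx : 0 < x) :
    ∫⁻ w : ℂ, kern w * gfun f (x * (1 + w)) =
      ∑' n : ℕ, ENNReal.ofReal (Real.pi * (2 ^ n / ((2 * n + 1).factorial : ℝ))) *
        (ENNReal.ofReal (x ^ (2 * n)) * (‖iteratedDeriv n f (x : ℂ)‖₊ : ℝ≥0∞) ^ 2) := by
  have hgm := gfun_meas f hf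
  have hkm := kern_meas
  rw [← Complex.lintegral_comp_polarCoord_symm]
  have hpol : ∀ p : ℝ × ℝ, Complex.polarCoord.symm p = p.1 * Complex.exp (p.2 * Complex.I) := by
    intro p
    rw [Complex.polarCoord_symm_apply, Complex.exp_mul_I]; push_cast; ring
  simp_rw [hpol]
  rw [polarCoord_target, Measure.volume_eq_prod, setLIntegral_prod]
  swap
  · apply Measurable.aemeasurable
    simp only [smul_eq_mul]
    have m1 : Measurable fun p : ℝ × ℝ => (p.1 * Complex.exp (p.2 * Complex.I) : ℂ) := by fun_prop
    exact (by fun_prop : Measurable fun p : ℝ × ℝ => ENNReal.ofReal p.1).mul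
      ((hkm.comp m1).mul (hgm.comp ((m1.const_add 1).const_mul (x : ℂ))))
  have step : ∀ r ∈ Ioi (0:ℝ), (∫⁻ α in Ioo (-Real.pi) Real.pi, ENNReal.ofReal r • (kern (r * Complex.exp (α * Complex.I)) *
      gfun f (x * (1 + r * Complex.exp (α * Complex.I))))) =
      ∑' n : ℕ, (ENNReal.ofReal (r ^ (2 * n + 1)) * ENNReal.ofReal ((√(1 - 2 * r ^ 2))⁻¹)) *
        (ENNReal.ofReal (2 * Real.pi * x ^ (2 * n) / (n.factorial : ℝ) ^ 2) *
        (‖iteratedDeriv n f (x : ℂ)‖₊ : ℝ≥0∞) ^ 2) := by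
    intro r hr
    have hr : 0 < r := hr
    have hk : ∀ α : ℝ, kern (r * Complex.exp (α * Complex.I)) = ENNReal.ofReal ((√(1 - 2 * r ^ 2))⁻¹) := by
      intro α
      rw [kern, norm_mul, Complex.norm_exp_ofReal_mul_I, mul_one, Complex.norm_real, Real.norm_of_nonneg hr.le]
    simp_rw [hk]
    by_cases hr2 : r ^ 2 < 1 / 2
    · have hg : ∀ α : ℝ, gfun f (x * (1 + r * Complex.exp (α * Complex.I))) = (‖f (x * (1 + r * Complex.exp (α * Complex.I)))‖₊ : ℝ≥0∞) ^ 2 := by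
        intro α
        rw [gfun, indicator_of_mem]
        apply mem_Delta_of x hx
        rw [norm_mul, Complex.norm_exp_ofReal_mul_I, mul_one, Complex.norm_real, Real.norm_of_nonneg hr.le]
        exact hr2
      simp_rw [hg, smul_eq_mul]
      rw [lintegral_const_mul' _ _ ENNReal.ofReal_ne_top, lintegral_const_mul' _ _ ENNReal.ofReal_ne_top,
        circle_int f hf x r hx hr hr2, ← ENNReal.tsum_mul_left, ← ENNReal.tsum_mul_left]
      congr 1; ext n
      rw [show 2 * Real.pi * (x * r) ^ (2 * n) / (n.factorial : ℝ) ^ 2 = r ^ (2 * n) * (2 * Real.pi * x ^ (2 * n) / (n.factorial : ℝ) ^ 2) by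
        rw [mul_pow]; ring, ENNReal.ofReal_mul (by positivity), pow_succ r (2 * n), ENNReal.ofReal_mul (by positivity)]
      ring
    · have : √(1 - 2 * r ^ 2) = 0 := Real.sqrt_eq_zero_of_nonpos (by linarith)
      simp [this]
  rw [setLIntegral_congr_fun measurableSet_Ioi step, lintegral_tsum (fun n => by fun_prop)]
  congr 1; ext n
  rw [lintegral_mul_const _ (by fun_prop), radial, ← mul_assoc, ← mul_assoc, ← ENNReal.ofReal_mul (by positivity),
    ← ENNReal.ofReal_mul (by positivity)]
  congr 2
  field_simp

lemma scale_int (h : ℂ → ℝ≥0∞) (hh : Measurable h) (x : ℝ) (hx : 0 < x) :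
    ∫⁻ w : ℂ, h (x * (1 + w)) = ENNReal.ofReal ((x ^ 2)⁻¹) * ∫⁻ z, h z := by
  rw [lintegral_add_left_eq_self (fun w : ℂ => h (x * w)) 1]
  have := Measure.map_addHaar_smul (volume : Measure ℂ) hx.ne'
  rw [Complex.finrank_real_complex, abs_of_pos (by positivity)] at this
  have h2 := lintegral_map (μ := (volume : Measure ℂ)) hh (g := fun w : ℂ => x • w) (by fun_prop)
  rw [this, lintegral_smul_measure] at h2
  simp only [Complex.real_smul, smul_eq_mul] at h2
  exact h2.symm

lemma kern_int (z : ℂ) (hz : z ∈ Delta) :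
    ∫⁻ x in Ioi (0:ℝ), ENNReal.ofReal (x⁻¹) * kern (z / x - 1) = ENNReal.ofReal Real.pi := by
  obtain ⟨h1, h2⟩ := hz
  have hab : z.im ^ 2 < z.re ^ 2 := sq_lt_sq' (abs_lt.mp h2).1 (abs_lt.mp h2).2
  rw [← arcsine (2 * (z.re ^ 2 - z.im ^ 2)) (2 * z.re) (by linarith), ← lintegral_indicator measurableSet_Ioi]
  congr 1; ext x
  by_cases hx : 0 < x
  · rw [indicator_of_mem (by exact hx), kern, ← ENNReal.ofReal_mul (by positivity)]
    congr 1
    rw [← mul_inv]; congr 1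
    have hxc : (x : ℂ) ≠ 0 := by exact_mod_cast hx.ne'
    have : z / x - 1 = (z - x) / x := by field_simp
    rw [this, norm_div, Complex.norm_real, Real.norm_of_nonneg hx.le]
    nth_rewrite 1 [← Real.sqrt_sq hx.le]
    rw [← Real.sqrt_mul (by positivity), div_pow, ← Complex.normSq_eq_norm_sq, Complex.normSq_apply]
    congr 1
    simp only [Complex.sub_re, Complex.sub_im, Complex.ofReal_re, Complex.ofReal_im]
    field_simp
    ring
  · rw [indicator_of_notMem (by exact hx), Real.sqrt_eq_zero_of_nonpos (by nlinarith [sq_nonneg x, sq_nonneg z.im]), inv_zero, ENNReal.ofReal_zero]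

lemma real_mem (x : ℝ) (hx : 0 < x) : (x : ℂ) ∈ Delta := by simpa [Delta] using hx

lemma iter_cont (f : ℂ → ℂ) (hf : DifferentiableOn ℂ f Delta) (n : ℕ) : ContinuousOn (iteratedDeriv n f) Delta := by
  have h := (hf.analyticOnNhd isOpen_Delta).iterated_deriv n
  rw [← iteratedDeriv_eq_iterate] at h
  exact h.continuousOn

lemma iter_meas (f : ℂ → ℂ) (hf : DifferentiableOn ℂ f Delta) (n : ℕ) :
    AEMeasurable (fun x : ℝ => (‖iteratedDeriv n f (x : ℂ)‖₊ : ℝ≥0∞) ^ 2) (volume.restrict (Ioi 0)) := by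
  have h : ContinuousOn (fun x : ℝ => iteratedDeriv n f (x : ℂ)) (Ioi 0) :=
    (iter_cont f hf n).comp Complex.continuous_ofReal.continuousOn (fun x hx => real_mem x hx)
  have h1 : AEMeasurable (fun x : ℝ => iteratedDeriv n f (x : ℂ)) (volume.restrict (Ioi 0)) := h.aemeasurable measurableSet_Ioi
  exact h1.enorm.pow_const 2

lemma tonelli (f : ℂ → ℂ) (hf : DifferentiableOn ℂ f Delta) :
    ∫⁻ x in Ioi (0:ℝ), ENNReal.ofReal x * ∫⁻ w : ℂ, kern w * gfun f (x * (1 + w)) =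
      ENNReal.ofReal Real.pi * ∫⁻ z in Delta, (‖f z‖₊ : ℝ≥0∞) ^ 2 := by
  have hgm := gfun_meas f hf
  have hkm := kern_meas
  have step : ∀ x ∈ Ioi (0:ℝ), ENNReal.ofReal x * ∫⁻ w : ℂ, kern w * gfun f (x * (1 + w)) =
      ∫⁻ z : ℂ, ENNReal.ofReal (x⁻¹) * kern (z / x - 1) * gfun f z := by
    intro x hx
    have hx : 0 < x := hx
    have hxc : (x : ℂ) ≠ 0 := by exact_mod_cast hx.ne'
    have m : Measurable fun z : ℂ => kern (z / x - 1) * gfun f z :=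
      (hkm.comp (by fun_prop)).mul hgm
    have := scale_int (fun z => kern (z / x - 1) * gfun f z) m x hx
    have e : ∀ w : ℂ, (x * (1 + w)) / x - 1 = w := fun w => by field_simp; ring
    simp only [e] at this
    rw [this, ← mul_assoc, ← ENNReal.ofReal_mul hx.le, ← lintegral_const_mul _ m]
    congr 1; ext z
    rw [← mul_assoc]; congr 3; field_simp
  rw [setLIntegral_congr_fun measurableSet_Ioi step, lintegral_lintegral_swap]
  · rw [← lintegral_indicator isOpen_Delta.measurableSet]
    change _ = _ * ∫⁻ z, gfun f z
    rw [← lintegral_const_mul _ hgm]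
    congr 1; ext z
    have m2 : Measurable fun x : ℝ => z / (x : ℂ) - 1 := by fun_prop
    have m1 : Measurable fun x : ℝ => ENNReal.ofReal x⁻¹ * kern (z / x - 1) :=
      (by fun_prop : Measurable fun x : ℝ => ENNReal.ofReal x⁻¹).mul (hkm.comp m2)
    rw [lintegral_mul_const _ m1]
    by_cases hz : z ∈ Delta
    · rw [kern_int z hz]
    · simp [gfun, hz]
  · apply Measurable.aemeasurable
    exact ((by fun_prop : Measurable fun p : ℝ × ℂ => ENNReal.ofReal p.1⁻¹).mul (hkm.comp (by fun_prop))).mul (hgm.comp measurable_snd)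

/-- The Aikawa–Hayashi–Saitoh identity for holomorphic functions on the sector `Δ`,
as an identity in `[0,∞]`. -/
theorem ahs_identity (f : ℂ → ℂ) (hf : DifferentiableOn ℂ f Delta) :
    ∫⁻ z in Delta, (‖f z‖₊ : ℝ≥0∞) ^ 2 ∂volume =
      ∑' n : ℕ, ENNReal.ofReal ((2 : ℝ) ^ n / (Nat.factorial (2 * n + 1) : ℝ)) *
        ∫⁻ x in Ioi (0 : ℝ),
          ENNReal.ofReal (x ^ (2 * n + 1)) *
            (‖iteratedDeriv n f (x : ℂ)‖₊ : ℝ≥0∞) ^ 2 ∂volume := by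
  have hpi := Real.pi_pos
  have h := tonelli f hf
  have step : ∀ x ∈ Ioi (0:ℝ), ENNReal.ofReal x * ∫⁻ w : ℂ, kern w * gfun f (x * (1 + w)) =
      ∑' n : ℕ, ENNReal.ofReal (Real.pi * (2 ^ n / ((2 * n + 1).factorial : ℝ))) *
        (ENNReal.ofReal (x ^ (2 * n + 1)) * (‖iteratedDeriv n f (x : ℂ)‖₊ : ℝ≥0∞) ^ 2) := by
    intro x hx
    have hx : 0 < x := hx
    rw [disc_int f hf x hx, ← ENNReal.tsum_mul_left]
    congr 1; ext n
    have hp : ENNReal.ofReal (x ^ (2 * n + 1)) = ENNReal.ofReal (x ^ (2 * n)) * ENNReal.ofReal x := by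
      rw [pow_succ, ENNReal.ofReal_mul (by positivity)]
    rw [hp]; ring
  have hm : ∀ n : ℕ, AEMeasurable (fun x : ℝ => ENNReal.ofReal (x ^ (2 * n + 1)) * (‖iteratedDeriv n f (x : ℂ)‖₊ : ℝ≥0∞) ^ 2)
      (volume.restrict (Ioi 0)) := fun n =>
    (by fun_prop : Measurable fun x : ℝ => ENNReal.ofReal (x ^ (2 * n + 1))).aemeasurable.mul (iter_meas f hf n)
  rw [setLIntegral_congr_fun measurableSet_Ioi step, lintegral_tsum (fun n => (hm n).const_mul _)] at h
  have h0 : ENNReal.ofReal Real.pi ≠ 0 := by simpa using hpi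
  apply (ENNReal.mul_right_inj h0 ENNReal.ofReal_ne_top).mp
  rw [← h, ← ENNReal.tsum_mul_left]
  congr 1; ext n
  rw [lintegral_const_mul' _ _ ENNReal.ofReal_ne_top, ENNReal.ofReal_mul hpi.le, mul_assoc]
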